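/- arXiv:1807.02089 — 5 statements merged into one kernel-verified Lean document; each statement's English description precedes it below -/
import Mathlib

section
/- Let d ≥ 1, λ > 0, m ≥ 1, T ≥ 1 and δ ∈ (0,1). On a probability space, let θ ∈ ℝ^d with ‖θ‖₂ ≤ 1, and let 𝓓 be a probability distribution on ℕ with τ_m := P_{D∼𝓓}(D ≤ m). For each round t = 1,…,T let A_t be a random vector in ℝ^d with ‖A_t‖₂ ≤ 1 and ⟨A_t,θ⟩ ∈ [0,1] almost surely; conditionally on (A_1,X_1,D_1,…,A_{t−1},X_{t−1},D_{t−1},A_t), the reward X_t ∈ {0,1} is Bernoulli with mean ⟨A_t,θ⟩; and D_t has law 𝓓 and is independent of (A_1,X_1,D_1,…,A_{t−1},X_{t−1},D_{t−1},A_t,X_t). Define the windowed least-squares estimator θ̂ᵂ_t = V_t(λ)^{-1} Σ_{s=1}^{t−1} X_s·1{D_s ≤ min(m, t−s)}·A_s. Then with probability at least 1 − 2δ, simultaneously for all t = 1,…,T: ‖θ̂ᵂ_t − τ_m·θ‖_{V_t(λ)} ≤ 2 f_{t,δ} + Σ_{s=max(1,t−m)}^{t−1} ‖A_s‖_{V_t(λ)^{-1}}.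 -/
open Finset Matrix MeasureTheory ProbabilityTheory

/-- `mnorm M x = √(xᵀ M x)`, the norm associated to a positive definite matrix `M`. -/
noncomputable def mnorm {d : ℕ} (M : Matrix (Fin d) (Fin d) ℝ) (x : Fin d → ℝ) : ℝ :=
  Real.sqrt (x ⬝ᵥ M.mulVec x)

/-- `Vmat A lam t = lam • I + ∑_{s=1}^{t-1} A_s A_sᵀ`. -/
noncomputable def Vmat {d : ℕ} (A : ℕ → Fin d → ℝ) (lam : ℝ) (t : ℕ) :
    Matrix (Fin d) (Fin d) ℝ :=
  lam • (1 : Matrix (Fin d) (Fin d) ℝ) + ∑ s ∈ Finset.Ico 1 t, vecMulVec (A s) (A s)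

/-- Exploration radius `f_{t,δ} = √λ + √(2 log(1/δ) + d log((dλ + t)/(dλ)))`. -/
noncomputable def fconf (d : ℕ) (lam δ : ℝ) (t : ℕ) : ℝ :=
  Real.sqrt lam +
    Real.sqrt (2 * Real.log (1 / δ) + d * Real.log ((d * lam + t) / (d * lam)))

/-- The σ-algebra generated by `A_1, X_1, D_1, …, A_{t-1}, X_{t-1}, D_{t-1}, A_t`. -/
def hist {Ω : Type*} {d : ℕ} (A : ℕ → Ω → Fin d → ℝ) (X : ℕ → Ω → ℝ)
    (D : ℕ → Ω → ℕ) (t : ℕ) : MeasurableSpace Ω :=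
  (⨆ s ∈ Finset.Ico 1 t,
      (MeasurableSpace.comap (A s) inferInstance ⊔
        MeasurableSpace.comap (X s) inferInstance ⊔
          MeasurableSpace.comap (D s) inferInstance)) ⊔
    MeasurableSpace.comap (A t) inferInstance

/-- The windowed least-squares estimator
`θ̂ᵂ_t = V_t(λ)⁻¹ ∑_{s=1}^{t-1} X_s · 1{D_s ≤ min(m, t-s)} · A_s`. -/
noncomputable def thetaHatW {Ω : Type*} {d : ℕ} (A : ℕ → Ω → Fin d → ℝ)
    (X : ℕ → Ω → ℝ) (D : ℕ → Ω → ℕ) (lam : ℝ) (m t : ℕ) (ω : Ω) : Fin d → ℝ :=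
  (Vmat (fun s => A s ω) lam t)⁻¹.mulVec
    (∑ s ∈ Finset.Ico 1 t,
      (X s ω * (if D s ω ≤ min m (t - s) then (1 : ℝ) else 0)) • A s ω)

noncomputable def Kf (w u η : ℝ) : ℝ :=
  Real.exp (η ^ 2 / 2 - (η - u) ^ 2 / (2 * (1 + w)) - Real.log (1 + w) / 2)

lemma hoeff_bern (q : ℝ) (h0 : 0 ≤ q) (h1 : q ≤ 1) (s : ℝ) :
    q * Real.exp ((1 - q) * s) + (1 - q) * Real.exp ((-q) * s) ≤ Real.exp (s ^ 2 / 2) := by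
  let μ : Measure ℝ := ENNReal.ofReal q • Measure.dirac (1 - q) +
    ENNReal.ofReal (1 - q) • Measure.dirac (-q)
  have hint : ∀ f : ℝ → ℝ, ∫ x, f x ∂μ = q * f (1 - q) + (1 - q) * f (-q) := by
    intro f
    have i1 : Integrable f (Measure.dirac (1 - q)) := integrable_dirac (by simp)
    have i2 : Integrable f (Measure.dirac (-q)) := integrable_dirac (by simp)
    rw [integral_add_measure (i1.smul_measure (by simp)) (i2.smul_measure (by simp)),
      integral_smul_measure, integral_smul_measure]
    simp [h0, h1]
  have hp : IsProbabilityMeasure μ := ⟨by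
    simp only [μ, Measure.coe_add, Pi.add_apply, Measure.smul_apply, measure_univ, smul_eq_mul, mul_one]
    rw [← ENNReal.ofReal_add h0 (by linarith)]; simp⟩
  have hb : ∀ᵐ x ∂μ, x ∈ Set.Icc (-q) (1 - q) := by
    simp only [μ, ae_add_measure_iff]
    constructor <;> refine Measure.ae_smul_measure ?_ _ <;>
      refine (ae_dirac_iff (p := fun x => x ∈ Set.Icc (-q) (1 - q)) measurableSet_Icc).2 ?_ <;>
      constructor <;> linarith
  have := (hasSubgaussianMGF_of_mem_Icc_of_integral_eq_zero (X := fun x => x)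
    measurable_id.aemeasurable hb (by rw [hint]; ring)).mgf_le s
  rw [mgf, hint] at this
  have e : ((1 - q) - (-q)) = 1 := by ring
  rw [e] at this
  simp only [mul_comm s] at this
  refine this.trans (Real.exp_le_exp.2 ?_)
  simp
  nlinarith [sq_nonneg s]

lemma gauss_shift (b a : ℝ) : ∫ x : ℝ, Real.exp (-b * (x - a) ^ 2) = √(Real.pi / b) := by
  rw [integral_sub_right_eq_self (fun x => Real.exp (-b * x ^ 2)) a, integral_gaussian]

lemma gauss_int (b a : ℝ) (hb : 0 < b) : Integrable (fun x : ℝ => Real.exp (-b * (x - a) ^ 2)) :=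
  (integrable_exp_neg_mul_sq hb).comp_sub_right a

lemma Kf_bern (w u q : ℝ) (hw : 0 ≤ w) (h0 : 0 ≤ q) (h1 : q ≤ 1) :
    q * Kf w u (1 - q) + (1 - q) * Kf w u (-q) ≤ 1 := by
  set c := 1 / (1 + w) with hc
  have hc0 : 0 < c := by positivity
  have hwc : (1 + w) = 1 / c := by rw [hc]; field_simp
  have hc1 : c ≤ 1 := by rw [hc, div_le_one (by linarith)]; linarith
  set r := √(1 - c) with hr
  have hr2 : r ^ 2 = 1 - c := Real.sq_sqrt (by linarith)
  have hsum : ∀ z : ℝ, q * (Real.exp ((1 - q) ^ 2 * (1 - c) / 2 + c * (1 - q) * u) * Real.exp (-(1/2) * (z - r * (1 - q)) ^ 2))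
      + (1 - q) * (Real.exp ((-q) ^ 2 * (1 - c) / 2 + c * (-q) * u) * Real.exp (-(1/2) * (z - r * (-q)) ^ 2))
      ≤ Real.exp (c * u ^ 2 / 2) * Real.exp (-(c / 2) * (z - r * u) ^ 2) := by
    intro z
    have key := hoeff_bern q h0 h1 (r * z + c * u)
    have key2 := mul_le_mul_of_nonneg_left key (Real.exp_pos (-(z^2/2))).le
    have e : ∀ η : ℝ, Real.exp (η ^ 2 * (1 - c) / 2 + c * η * u) * Real.exp (-(1/2) * (z - r * η) ^ 2)
        = Real.exp (-(z^2/2)) * Real.exp (η * (r * z + c * u)) := by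
      intro η
      rw [← Real.exp_add, ← Real.exp_add]; congr 1
      rw [← hr2]; ring
    rw [e, e]
    have e2 : Real.exp (c * u ^ 2 / 2) * Real.exp (-(c / 2) * (z - r * u) ^ 2)
       = Real.exp (-(z^2/2)) * Real.exp ((r * z + c * u) ^ 2 / 2) := by
      rw [← Real.exp_add, ← Real.exp_add]; congr 1
      have : c = 1 - r ^ 2 := by linarith
      rw [this]; ring
    rw [e2]
    linarith
  have i1 := gauss_int (1/2) (r * (1 - q)) (by norm_num)
  have i2 := gauss_int (1/2) (r * (-q)) (by norm_num)
  have i3 := gauss_int (c/2) (r * u) (by positivity)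
  have hI := integral_mono (((i1.const_mul _).const_mul q).add ((i2.const_mul _).const_mul (1 - q)))
    (i3.const_mul _) hsum
  simp only [Pi.add_apply] at hI
  rw [integral_add ((i1.const_mul _).const_mul q) ((i2.const_mul _).const_mul (1 - q))] at hI
  simp only [integral_const_mul, gauss_shift] at hI
  have s1 : √(Real.pi / (c / 2)) = √(1 / c) * √(Real.pi / (1 / 2)) := by
    rw [← Real.sqrt_mul (by positivity)]; congr 1; field_simp
  have hpi : 0 < √(Real.pi / (1 / 2)) := by positivity
  rw [s1] at hI
  have hI2 : q * Real.exp ((1 - q) ^ 2 * (1 - c) / 2 + c * (1 - q) * u) +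
      (1 - q) * Real.exp ((-q) ^ 2 * (1 - c) / 2 + c * (-q) * u) ≤ Real.exp (c * u ^ 2 / 2) * √(1 / c) := by
    refine le_of_mul_le_mul_right ?_ hpi
    linarith
  have hs : √(1 / c) = Real.exp (Real.log (1 + w) / 2) := by
    rw [← hwc, Real.sqrt_eq_rpow, Real.rpow_def_of_pos (by linarith)]; ring_nf
  rw [hs, ← Real.exp_add] at hI2
  have eK : ∀ η : ℝ, Kf w u η = Real.exp (η ^ 2 * (1 - c) / 2 + c * η * u) *
      Real.exp (-(c * u ^ 2 / 2 + Real.log (1 + w) / 2)) := by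
    intro η
    rw [Kf, ← Real.exp_add]; congr 1
    rw [hc]; field_simp; ring
  rw [eK, eK]
  have := mul_le_mul_of_nonneg_right hI2 (Real.exp_pos (-(c * u ^ 2 / 2 + Real.log (1 + w) / 2))).le
  rw [← Real.exp_add, add_neg_cancel, Real.exp_zero] at this
  linarith
section det
variable {d : ℕ}

lemma Vmat_succ (a : ℕ → Fin d → ℝ) (lam : ℝ) (t : ℕ) (ht : 1 ≤ t) :
    Vmat a lam (t + 1) = Vmat a lam t + vecMulVec (a t) (a t) := by
  rw [Vmat, Vmat, Finset.sum_Ico_succ_top ht, add_assoc]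

lemma vmv (a x : Fin d → ℝ) : vecMulVec a a *ᵥ x = (a ⬝ᵥ x) • a := by
  rw [vecMulVec_mulVec]; ext i; simp [mul_comm]

lemma Vmat_posDef (a : ℕ → Fin d → ℝ) (lam : ℝ) (hl : 0 < lam) (t : ℕ) :
    (Vmat a lam t).PosDef := by
  refine PosDef.add_posSemidef (PosDef.one.smul hl) ?_
  refine posSemidef_sum _ fun i _ => ?_
  simpa using posSemidef_vecMulVec_self_star (a i)

lemma pd_symm {M : Matrix (Fin d) (Fin d) ℝ} (h : M.PosDef) (x y : Fin d → ℝ) :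
    x ⬝ᵥ M *ᵥ y = y ⬝ᵥ M *ᵥ x := by
  have : Mᵀ = M := by simpa using h.isHermitian.eq
  rw [dotProduct_mulVec, ← mulVec_transpose, this, dotProduct_comm]

lemma pd_nonneg {M : Matrix (Fin d) (Fin d) ℝ} (h : M.PosDef) (x : Fin d → ℝ) :
    0 ≤ x ⬝ᵥ M *ᵥ x := by
  simpa using h.posSemidef.dotProduct_mulVec_nonneg x

lemma mnorm_add {M : Matrix (Fin d) (Fin d) ℝ} (h : M.PosDef) (x y : Fin d → ℝ) :
    mnorm M (x + y) ≤ mnorm M x + mnorm M y := by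
  have exp : ∀ r : ℝ, (x + r • y) ⬝ᵥ M *ᵥ (x + r • y) =
      (y ⬝ᵥ M *ᵥ y) * (r * r) + (2 * (x ⬝ᵥ M *ᵥ y)) * r + x ⬝ᵥ M *ᵥ x := by
    intro r
    simp only [mulVec_add, mulVec_smul, add_dotProduct, dotProduct_add, smul_dotProduct,
      dotProduct_smul, smul_eq_mul]
    rw [pd_symm h y x]; ring
  have hd := discrim_le_zero (fun r => (exp r) ▸ pd_nonneg h (x + r • y))
  rw [discrim] at hd
  have hx := pd_nonneg h x
  have hy := pd_nonneg h y
  have hcs : x ⬝ᵥ M *ᵥ y ≤ mnorm M x * mnorm M y := by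
    rw [mnorm, mnorm, ← Real.sqrt_mul hx]
    apply Real.le_sqrt_of_sq_le
    nlinarith
  have e1 := exp 1
  rw [one_smul] at e1
  rw [mnorm, e1]
  apply Real.sqrt_le_iff.2
  refine ⟨add_nonneg (Real.sqrt_nonneg _) (Real.sqrt_nonneg _), ?_⟩
  have a1 : mnorm M x ^ 2 = _ := Real.sq_sqrt hx
  have a2 : mnorm M y ^ 2 = _ := Real.sq_sqrt hy
  nlinarith

lemma mnorm_smul (M : Matrix (Fin d) (Fin d) ℝ) (r : ℝ) (x : Fin d → ℝ) :
    mnorm M (r • x) = |r| * mnorm M x := by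
  rw [mnorm, mnorm, ← Real.sqrt_sq_eq_abs, ← Real.sqrt_mul (sq_nonneg r)]
  congr 1
  simp [mulVec_smul]; ring

lemma mnorm_sum {M : Matrix (Fin d) (Fin d) ℝ} (h : M.PosDef) {ι : Type*} (s : Finset ι)
    (f : ι → Fin d → ℝ) : mnorm M (∑ i ∈ s, f i) ≤ ∑ i ∈ s, mnorm M (f i) := by
  classical
  induction s using Finset.induction_on with
  | empty => simp [mnorm]
  | insert i s hi ih =>
    rw [Finset.sum_insert hi, Finset.sum_insert hi]
    exact (mnorm_add h _ _).trans (by linarith)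

lemma V_inv_mul {M : Matrix (Fin d) (Fin d) ℝ} (h : M.PosDef) (x : Fin d → ℝ) :
    M *ᵥ (M⁻¹ *ᵥ x) = x := by
  rw [mulVec_mulVec, mul_nonsing_inv _ (isUnit_iff_ne_zero.2 h.det_pos.ne'), one_mulVec]

lemma V_mul_inv {M : Matrix (Fin d) (Fin d) ℝ} (h : M.PosDef) (x : Fin d → ℝ) :
    M⁻¹ *ᵥ (M *ᵥ x) = x := by
  rw [mulVec_mulVec, nonsing_inv_mul _ (isUnit_iff_ne_zero.2 h.det_pos.ne'), one_mulVec]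

lemma mnorm_inv {M : Matrix (Fin d) (Fin d) ℝ} (h : M.PosDef) (x : Fin d → ℝ) :
    mnorm M (M⁻¹ *ᵥ x) = mnorm M⁻¹ x := by
  rw [mnorm, mnorm, V_inv_mul h, dotProduct_comm]

lemma mnorm_theta (a : ℕ → Fin d → ℝ) (lam : ℝ) (hl : 0 < lam) (t : ℕ) (θ : Fin d → ℝ)
    (hθ : Real.sqrt (θ ⬝ᵥ θ) ≤ 1) : lam * mnorm (Vmat a lam t)⁻¹ θ ≤ √lam := by
  have h := Vmat_posDef a lam hl t
  set y := (Vmat a lam t)⁻¹ *ᵥ θ with hy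
  have hVy : Vmat a lam t *ᵥ y = θ := V_inv_mul h θ
  have hθ1 : θ ⬝ᵥ θ ≤ 1 := by
    simpa using (Real.sqrt_le_left zero_le_one).1 hθ
  have h1 : lam * (y ⬝ᵥ y) ≤ y ⬝ᵥ θ := by
    have e0 : y ⬝ᵥ θ = y ⬝ᵥ Vmat a lam t *ᵥ y := by rw [hVy]
    rw [e0]
    rw [Vmat, add_mulVec, dotProduct_add, smul_mulVec, one_mulVec, dotProduct_smul, smul_eq_mul]
    have : (∑ s ∈ Finset.Ico 1 t, vecMulVec (a s) (a s)).PosSemidef := by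
      refine posSemidef_sum _ fun i _ => ?_
      simpa using posSemidef_vecMulVec_self_star (a i)
    have := this.dotProduct_mulVec_nonneg y
    simp only [star_trivial] at this
    linarith
  have h2 : (y ⬝ᵥ θ) ^ 2 ≤ (y ⬝ᵥ y) * (θ ⬝ᵥ θ) := by
    have := Finset.sum_mul_sq_le_sq_mul_sq Finset.univ y θ
    simpa [dotProduct, sq] using this
  have h3 : 0 ≤ y ⬝ᵥ y := by simpa using dotProduct_star_self_nonneg y
  have hz : 0 ≤ y ⬝ᵥ θ := le_trans (by positivity) h1
  have h4 : lam * (y ⬝ᵥ θ) ≤ 1 := by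
    by_contra hc
    push Not at hc
    have : (y ⬝ᵥ θ) ^ 2 ≤ y ⬝ᵥ y := h2.trans (by nlinarith)
    have hz0 : 0 < y ⬝ᵥ θ := by
      rcases hz.lt_or_eq with h | h
      · exact h
      · rw [← h] at hc; linarith
    have := mul_pos hz0 (sub_pos.2 hc)
    nlinarith
  have : mnorm (Vmat a lam t)⁻¹ θ = √(y ⬝ᵥ θ) := by rw [mnorm, dotProduct_comm]
  rw [this]
  apply Real.le_sqrt_of_sq_le
  rw [mul_pow, Real.sq_sqrt hz]
  nlinarith

noncomputable def Sdet (a : ℕ → Fin d → ℝ) (e : ℕ → ℝ) (t : ℕ) : Fin d → ℝ :=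
  ∑ s ∈ Finset.Ico 1 t, e s • a s

noncomputable def Mdet (lam : ℝ) (a : ℕ → Fin d → ℝ) (e : ℕ → ℝ) (t : ℕ) : ℝ :=
  Real.exp ((Sdet a e t ⬝ᵥ (Vmat a lam t)⁻¹ *ᵥ Sdet a e t -
    Real.log ((Vmat a lam t).det / lam ^ d)) / 2)

noncomputable def wdet (lam : ℝ) (a : ℕ → Fin d → ℝ) (t : ℕ) : ℝ :=
  a t ⬝ᵥ (Vmat a lam t)⁻¹ *ᵥ a t

noncomputable def udet (lam : ℝ) (a : ℕ → Fin d → ℝ) (e : ℕ → ℝ) (t : ℕ) : ℝ :=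
  a t ⬝ᵥ (Vmat a lam t)⁻¹ *ᵥ Sdet a e t

lemma wdet_nonneg (lam : ℝ) (hl : 0 < lam) (a : ℕ → Fin d → ℝ) (t : ℕ) : 0 ≤ wdet lam a t :=
  pd_nonneg (Vmat_posDef a lam hl t).inv _

lemma Mdet_one (lam : ℝ) (hl : 0 < lam) (a : ℕ → Fin d → ℝ) (e : ℕ → ℝ) : Mdet lam a e 1 = 1 := by
  have : lam ^ d ≠ 0 := by positivity
  simp [Mdet, Sdet, Vmat, this]

lemma Mdet_succ (lam : ℝ) (hl : 0 < lam) (a : ℕ → Fin d → ℝ) (e : ℕ → ℝ) (t : ℕ) (ht : 1 ≤ t) :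
    Mdet lam a e (t + 1) = Mdet lam a e t * Kf (wdet lam a t) (udet lam a e t) (e t) := by
  have h := Vmat_posDef a lam hl t
  have h' := Vmat_posDef a lam hl (t + 1)
  have hw := wdet_nonneg lam hl a t
  have hS : Sdet a e (t + 1) = Sdet a e t + e t • a t := by
    rw [Sdet, Sdet, Finset.sum_Ico_succ_top ht]
  have hdet : (Vmat a lam (t + 1)).det = (Vmat a lam t).det * (1 + wdet lam a t) := by
    rw [Vmat_succ a lam t ht, vecMulVec_eq Unit,
      det_add_replicateCol_mul_replicateRow (isUnit_iff_ne_zero.2 h.det_pos.ne')]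
    congr 1
    rw [det_unique, Matrix.add_apply, Matrix.mul_assoc, one_apply_eq]
    congr 1
  set V := Vmat a lam t with hV
  set S := Sdet a e t with hSd
  set w := wdet lam a t with hwd
  set u := udet lam a e t with hud
  have hinv : (Vmat a lam (t + 1))⁻¹ *ᵥ (S + e t • a t) =
      V⁻¹ *ᵥ S + ((e t - u) / (1 + w)) • (V⁻¹ *ᵥ a t) := by
    rw [← V_mul_inv h' (V⁻¹ *ᵥ S + ((e t - u) / (1 + w)) • (V⁻¹ *ᵥ a t))]
    congr 1
    rw [Vmat_succ a lam t ht, add_mulVec, ← hV, mulVec_add, mulVec_smul, V_inv_mul h, V_inv_mul h, vmv,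
      dotProduct_add, dotProduct_smul]
    change _ = S + ((e t - u) / (1 + w)) • a t + (u + ((e t - u) / (1 + w)) • w) • a t
    rw [add_assoc, ← add_smul]
    congr 2
    simp only [smul_eq_mul]
    field_simp
    ring
  rw [Mdet, Mdet, Kf, ← Real.exp_add, hS, hinv, hdet]
  congr 1
  have hl2 : Real.log (V.det * (1 + w) / lam ^ d) = Real.log (V.det / lam ^ d) + Real.log (1 + w) := by
    rw [← Real.log_mul (div_pos h.det_pos (by positivity)).ne' (by linarith)]; congr 1; ring
  rw [hl2]
  simp only [add_dotProduct, dotProduct_add, smul_dotProduct, dotProduct_smul, smul_eq_mul]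
  rw [pd_symm h.inv S (a t)]
  change (S ⬝ᵥ V⁻¹ *ᵥ S + e t * u + (e t - u) / (1 + w) * (u + e t * w) -
    (Real.log (V.det / lam ^ d) + Real.log (1 + w))) / 2 =
    (S ⬝ᵥ V⁻¹ *ᵥ S - Real.log (V.det / lam ^ d)) / 2 +
      (e t ^ 2 / 2 - (e t - u) ^ 2 / (2 * (1 + w)) - Real.log (1 + w) / 2)
  field_simp
  ring

lemma logdet_le (hd : 1 ≤ d) (lam : ℝ) (hl : 0 < lam) (a : ℕ → Fin d → ℝ) (t : ℕ) 
    (ha : ∀ s ∈ Finset.Ico 1 t, a s ⬝ᵥ a s ≤ 1) :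
    Real.log ((Vmat a lam t).det / lam ^ d) ≤ d * Real.log ((d * lam + t) / (d * lam)) := by
  have h := Vmat_posDef a lam hl t
  have hd0 : (0:ℝ) < d := by exact_mod_cast hd
  have htr : (Vmat a lam t).trace ≤ d * lam + t := by
    rw [Vmat, trace_add, trace_smul, trace_one, trace_sum]
    have : ∑ s ∈ Finset.Ico 1 t, (vecMulVec (a s) (a s)).trace ≤ ∑ s ∈ Finset.Ico 1 t, (1:ℝ) := by
      refine Finset.sum_le_sum fun s hs => ?_
      rw [trace_vecMulVec]; exact ha s hs
    have h2 : ∑ s ∈ Finset.Ico 1 t, (1:ℝ) ≤ t := by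
      simp
    simp only [Fintype.card_fin, smul_eq_mul]
    linarith
  have hev : ∀ i, 0 < h.isHermitian.eigenvalues i := fun i => h.eigenvalues_pos i
  have hdet : (Vmat a lam t).det = ∏ i, h.isHermitian.eigenvalues i := by
    simpa using h.isHermitian.det_eq_prod_eigenvalues
  have htr' : (Vmat a lam t).trace = ∑ i, h.isHermitian.eigenvalues i := by
    simpa using h.isHermitian.trace_eq_sum_eigenvalues
  set y : ℝ := (d * lam + t) / d with hy
  have hy0 : 0 < y := by positivity
  have hlog : ∀ i, Real.log (h.isHermitian.eigenvalues i) ≤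
      Real.log y + (h.isHermitian.eigenvalues i / y - 1) := by
    intro i
    have := Real.log_le_sub_one_of_pos (div_pos (hev i) hy0)
    rw [Real.log_div (hev i).ne' hy0.ne'] at this
    linarith
  have hsum := Finset.sum_le_sum (fun i (_ : i ∈ Finset.univ) => hlog i)
  rw [← Real.log_prod (fun i _ => (hev i).ne'), ← hdet, Finset.sum_add_distrib,
    Finset.sum_sub_distrib, ← Finset.sum_div, ← htr'] at hsum
  simp only [Finset.sum_const, Finset.card_univ, Fintype.card_fin, nsmul_eq_mul, mul_one] at hsum
  have h5 : (Vmat a lam t).trace / y ≤ d := by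
    rw [div_le_iff₀ hy0, hy]; field_simp; exact htr
  have e : (d * lam + t) / (d * lam) = y / lam := by rw [hy]; field_simp
  rw [e, Real.log_div h.det_pos.ne' (by positivity), Real.log_div hy0.ne' hl.ne', Real.log_pow]
  linarith
end det
section prob

lemma ville {Ω : Type*} {m0 : MeasurableSpace Ω} (P : Measure Ω) [IsProbabilityMeasure P]
    (F : ℕ → MeasurableSpace Ω) (hF : ∀ k, F k ≤ m0) (hmono : ∀ k, F k ≤ F (k + 1))
    (M : ℕ → Ω → ℝ) (hM : ∀ k, Measurable[F k] (M k)) (n : ℕ)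
    (hint : ∀ k ≤ n, Integrable (M k) P)
    (hstep : ∀ k < n, ∀ B, MeasurableSet[F k] B → ∫ ω in B, M (k + 1) ω ∂P ≤ ∫ ω in B, M k ω ∂P)
    (h0 : ∫ ω, M 0 ω ∂P ≤ 1) (hnn : ∀ k ω, 0 ≤ M k ω) (c : ℝ) :
    c * P.real {ω | ∃ k ≤ n, c ≤ M k ω} ≤ 1 := by
  have hMs : ∀ k, MeasurableSet[F k] {ω | c ≤ M k ω} := fun k => hM k measurableSet_Ici
  have hE : ∀ k, MeasurableSet[F k] {ω | ∃ j ≤ k, c ≤ M j ω} := by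
    intro k
    induction k with
    | zero =>
      have : {ω | ∃ j ≤ 0, c ≤ M j ω} = {ω | c ≤ M 0 ω} := by ext; simp
      rw [this]
      exact hMs 0
    | succ k ih =>
      have : {ω | ∃ j ≤ k + 1, c ≤ M j ω} = {ω | ∃ j ≤ k, c ≤ M j ω} ∪ {ω | c ≤ M (k + 1) ω} := by
        ext ω; simp only [Nat.le_succ_iff, Set.mem_ofPred_eq, Set.mem_union]
        constructor
        · rintro ⟨j, h | h, hj⟩
          · exact Or.inl ⟨j, h, hj⟩
          · subst h; exact Or.inr hj
        · rintro (⟨j, h, hj⟩ | h)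
          · exact ⟨j, Or.inl h, hj⟩
          · exact ⟨k + 1, Or.inr rfl, h⟩
      rw [this]
      exact MeasurableSet.union (hmono k _ ih)
        (hMs (k + 1))
  have hsplit : ∀ k ≤ n, ∀ B, MeasurableSet B →
      c * P.real (B ∩ {ω | c ≤ M k ω}) + ∫ ω in B \ {ω | c ≤ M k ω}, M k ω ∂P ≤
        ∫ ω in B, M k ω ∂P := by
    intro k hk B hB
    have hms : MeasurableSet {ω | c ≤ M k ω} :=
      hF k _ (hMs k)
    have hsp := integral_inter_add_sdiff (s := B) hms (hint k hk).integrableOn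
    have : ∫ ω in B ∩ {ω | c ≤ M k ω}, c ∂P ≤ ∫ ω in B ∩ {ω | c ≤ M k ω}, M k ω ∂P := by
      refine setIntegral_mono_on (by simp) (hint k hk).integrableOn (hB.inter hms) ?_
      intro x hx; exact hx.2
    rw [setIntegral_const, smul_eq_mul, mul_comm] at this
    linarith
  have claim : ∀ k ≤ n, c * P.real {ω | ∃ j ≤ k, c ≤ M j ω} +
      ∫ ω in {ω | ∃ j ≤ k, c ≤ M j ω}ᶜ, M k ω ∂P ≤ 1 := by
    intro k
    induction k with
    | zero =>
      intro hk
      have := hsplit 0 hk Set.univ MeasurableSet.univ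
      rw [Set.univ_inter, ← Set.compl_eq_univ_sdiff] at this
      simp only [Measure.restrict_univ] at this
      have e : {ω | ∃ j ≤ 0, c ≤ M j ω} = {ω | c ≤ M 0 ω} := by ext; simp
      rw [e]; linarith
    | succ k ih =>
      intro hk
      have ih := ih (by omega)
      have h1 := hstep k (by omega) _ (hE k).compl
      have hm := hF k _ (hE k)
      have h2 := hsplit (k + 1) hk _ hm.compl
      have e : {ω | ∃ j ≤ k + 1, c ≤ M j ω} = {ω | ∃ j ≤ k, c ≤ M j ω} ∪
          ({ω | ∃ j ≤ k, c ≤ M j ω}ᶜ ∩ {ω | c ≤ M (k + 1) ω}) := by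
        ext ω; simp only [Nat.le_succ_iff, Set.mem_ofPred_eq, Set.mem_union, Set.mem_inter_iff,
          Set.mem_compl_iff]
        constructor
        · rintro ⟨j, h | h, hj⟩
          · exact Or.inl ⟨j, h, hj⟩
          · subst h
            by_cases h : ∃ j ≤ k, c ≤ M j ω
            · exact Or.inl h
            · exact Or.inr ⟨h, hj⟩
        · rintro (⟨j, h, hj⟩ | ⟨_, h⟩)
          · exact ⟨j, Or.inl h, hj⟩
          · exact ⟨k + 1, Or.inr rfl, h⟩
      have e2 : {ω | ∃ j ≤ k + 1, c ≤ M j ω}ᶜ =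
          {ω | ∃ j ≤ k, c ≤ M j ω}ᶜ \ {ω | c ≤ M (k + 1) ω} := by
        rw [e]; ext ω
        simp only [Set.mem_compl_iff, Set.mem_union, Set.mem_inter_iff, Set.mem_sdiff]
        tauto
      rw [e2, e, measureReal_union _ (hm.compl.inter (hF (k+1) _
        (hMs (k + 1))))]
      · linarith
      · exact Set.disjoint_left.2 fun x hx hx' => hx'.1 hx
  have := claim n le_rfl
  have h3 : 0 ≤ ∫ ω in {ω | ∃ j ≤ n, c ≤ M j ω}ᶜ, M n ω ∂P := integral_nonneg (hnn n)
  linarith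

lemma EY {Ω : Type*} (F : MeasurableSpace Ω) {m0 : MeasurableSpace Ω} (P : Measure Ω)
    [IsProbabilityMeasure P] (hF : F ≤ m0) (X : Ω → ℝ) (hX : Measurable X)
    (hX01 : ∀ᵐ ω ∂P, X ω = 0 ∨ X ω = 1) (G : Ω → ℝ) (hcond : P[X | F] =ᵐ[P] G)
    (D : Ω → ℕ) (hD : Measurable D) (m : ℕ) (𝓓 : Measure ℕ) (hlaw : Measure.map D P = 𝓓)
    (hind : Indep (MeasurableSpace.comap D inferInstance)
        (F ⊔ MeasurableSpace.comap X inferInstance) P)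
    (H : Ω → ℝ) (hH : Measurable[F] H) (C : ℝ) (hb : ∀ᵐ ω ∂P, |H ω| ≤ C) :
    ∫ ω, (X ω * if D ω ≤ m then (1:ℝ) else 0) * H ω ∂P =
      ∫ ω, ((𝓓 {n | n ≤ m}).toReal * G ω) * H ω ∂P := by
  have hH0 : Measurable H := hH.mono hF le_rfl
  have hXint : Integrable X P := by
    refine Integrable.of_bound hX.aestronglyMeasurable 1 ?_
    filter_upwards [hX01] with ω h
    rcases h with h | h <;> simp [h]
  have hHX : Integrable (H * X) P :=
    hXint.bdd_mul hH0.aestronglyMeasurable (by simpa using hb)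
  have hIm : Measurable (fun n : ℕ => if n ≤ m then (1:ℝ) else 0) := measurable_of_countable _
  have hindf : IndepFun (fun ω => if D ω ≤ m then (1:ℝ) else 0) (H * X) P := by
    rw [IndepFun_iff_Indep]
    refine indep_of_indep_of_le_left (indep_of_indep_of_le_right hind ?_) ?_
    · refine Measurable.comap_le ?_
      refine Measurable.mul (hH.mono le_sup_left le_rfl) ?_
      exact (comap_measurable X).mono le_sup_right le_rfl
    · refine Measurable.comap_le ?_
      exact hIm.comp (comap_measurable D)
  have h1 := hindf.integral_mul_eq_mul_integral (hIm.comp hD).aestronglyMeasurable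
    hHX.aestronglyMeasurable
  have h2 : ∫ ω, (if D ω ≤ m then (1:ℝ) else 0) ∂P = (𝓓 {n | n ≤ m}).toReal := by
    rw [← hlaw, Measure.map_apply hD (MeasurableSet.of_discrete)]
    have : (fun ω => if D ω ≤ m then (1:ℝ) else 0) = (D ⁻¹' {n | n ≤ m}).indicator 1 := by
      ext ω; simp [Set.indicator]
    rw [this, integral_indicator_one (hD (MeasurableSet.of_discrete))]
    rfl
  have h3 : ∫ ω, (H * X) ω ∂P = ∫ ω, G ω * H ω ∂P := by
    rw [← integral_condExp hF]
    refine integral_congr_ae ?_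
    filter_upwards [condExp_mul_of_stronglyMeasurable_left hH.stronglyMeasurable hHX hXint, hcond]
      with ω h h'
    rw [h, Pi.mul_apply, h', mul_comm]
  rw [h2, h3] at h1
  simp_rw [mul_assoc]
  rw [integral_const_mul, ← h1]
  refine integral_congr_ae (Filter.Eventually.of_forall fun ω => ?_)
  simp only [Pi.mul_apply]; ring

lemma meas_det {Ω : Type*} (F : MeasurableSpace Ω) {d : ℕ} (V : Ω → Matrix (Fin d) (Fin d) ℝ)
    (h : ∀ i j, Measurable fun ω => V ω i j) : Measurable fun ω => (V ω).det := by
  simp only [det_apply]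
  refine Finset.measurable_sum _ fun σ _ => ?_
  exact (Finset.measurable_prod _ fun i _ => h _ _).const_smul _

lemma meas_inv {Ω : Type*} (F : MeasurableSpace Ω) {d : ℕ} (V : Ω → Matrix (Fin d) (Fin d) ℝ)
    (h : ∀ i j, Measurable fun ω => V ω i j) (i j : Fin d) :
    Measurable fun ω => (V ω)⁻¹ i j := by
  simp only [Matrix.inv_def, Matrix.smul_apply, adjugate_apply, smul_eq_mul, Ring.inverse_eq_inv']
  refine (meas_det F V h).inv.mul (meas_det F _ fun k l => ?_)
  simp only [updateRow_apply]
  split_ifs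
  · exact measurable_const
  · exact h k l

lemma meas_quad {Ω : Type*} (F : MeasurableSpace Ω) {d : ℕ} (V : Ω → Matrix (Fin d) (Fin d) ℝ)
    (h : ∀ i j, Measurable fun ω => V ω i j) (x y : Ω → Fin d → ℝ) (hx : Measurable x)
    (hy : Measurable y) : Measurable fun ω => x ω ⬝ᵥ V ω *ᵥ y ω := by
  simp only [mulVec, dotProduct]
  refine Finset.measurable_sum _ fun i _ => ((measurable_pi_apply i).comp hx).mul ?_
  exact Finset.measurable_sum _ fun j _ => (h i j).mul ((measurable_pi_apply j).comp hy)

lemma meas_Vmat {Ω : Type*} (F : MeasurableSpace Ω) {d : ℕ} (A : ℕ → Ω → Fin d → ℝ) (lam : ℝ)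
    (t : ℕ) (h : ∀ s ∈ Finset.Ico 1 t, Measurable (A s)) (i j : Fin d) :
    Measurable fun ω => Vmat (fun s => A s ω) lam t i j := by
  simp only [Vmat, Matrix.add_apply, Matrix.sum_apply, vecMulVec_apply]
  refine measurable_const.add (Finset.measurable_sum _ fun s hs => ?_)
  exact ((measurable_pi_apply i).comp (h s hs)).mul ((measurable_pi_apply j).comp (h s hs))

lemma meas_S {Ω : Type*} (F : MeasurableSpace Ω) {d : ℕ} (A : ℕ → Ω → Fin d → ℝ) (e : ℕ → Ω → ℝ)
    (t : ℕ) (h : ∀ s ∈ Finset.Ico 1 t, Measurable (A s))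
    (he : ∀ s ∈ Finset.Ico 1 t, Measurable (e s)) :
    Measurable fun ω => Sdet (fun s => A s ω) (fun s => e s ω) t := by
  simp only [Sdet]
  exact Finset.measurable_sum _ fun s hs => (he s hs).smul (h s hs)

lemma meas_M {Ω : Type*} (F : MeasurableSpace Ω) {d : ℕ} (A : ℕ → Ω → Fin d → ℝ) (e : ℕ → Ω → ℝ)
    (lam : ℝ) (t : ℕ) (h : ∀ s ∈ Finset.Ico 1 t, Measurable (A s))
    (he : ∀ s ∈ Finset.Ico 1 t, Measurable (e s)) :
    Measurable fun ω => Mdet lam (fun s => A s ω) (fun s => e s ω) t := by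
  simp only [Mdet]
  have h1 := meas_Vmat F A lam t h
  have h2 := meas_S F A e t h he
  exact (((meas_quad F _ (meas_inv F _ h1) _ _ h2 h2).sub
    ((meas_det F _ h1).div_const _).log).div_const 2).exp

lemma meas_K {Ω : Type*} (F : MeasurableSpace Ω) (w u q : Ω → ℝ) (hw : Measurable w)
    (hu : Measurable u) (hq : Measurable q) : Measurable fun ω => Kf (w ω) (u ω) (q ω) := by
  unfold Kf; fun_prop

lemma Kf_nonneg (w u η : ℝ) : 0 ≤ Kf w u η := (Real.exp_pos _).le

lemma Kf_le (w u η : ℝ) (hw : 0 ≤ w) (hη : |η| ≤ 1) : Kf w u η ≤ Real.exp (1 / 2) := by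
  rw [Kf]
  apply Real.exp_le_exp.2
  have h1 : η ^ 2 ≤ 1 := by rw [← sq_abs]; nlinarith [abs_nonneg η]
  have h2 : 0 ≤ (η - u) ^ 2 / (2 * (1 + w)) := by positivity
  have h3 : 0 ≤ Real.log (1 + w) := Real.log_nonneg (by linarith)
  linarith
end prob
section hist
variable {Ω : Type*} {d : ℕ} (A : ℕ → Ω → Fin d → ℝ) (X : ℕ → Ω → ℝ) (D : ℕ → Ω → ℕ)

lemma hist_aux (t s : ℕ) (hs : s ∈ Finset.Ico 1 t) :
    (MeasurableSpace.comap (A s) inferInstance ⊔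
        MeasurableSpace.comap (X s) inferInstance ⊔
          MeasurableSpace.comap (D s) inferInstance) ≤ hist A X D t := by
  rw [hist]
  refine le_trans ?_ le_sup_left
  exact le_iSup₂ (f := fun s (_ : s ∈ Finset.Ico 1 t) =>
    (MeasurableSpace.comap (A s) inferInstance ⊔
        MeasurableSpace.comap (X s) inferInstance ⊔
          MeasurableSpace.comap (D s) inferInstance)) s hs

lemma hist_A (t s : ℕ) (hs : s ∈ Finset.Ico 1 t) : Measurable[hist A X D t] (A s) :=
  (comap_measurable (A s)).mono
    (le_trans (le_trans le_sup_left le_sup_left) (hist_aux A X D t s hs)) le_rfl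

lemma hist_X (t s : ℕ) (hs : s ∈ Finset.Ico 1 t) : Measurable[hist A X D t] (X s) :=
  (comap_measurable (X s)).mono
    (le_trans (le_trans le_sup_right le_sup_left) (hist_aux A X D t s hs)) le_rfl

lemma hist_D (t s : ℕ) (hs : s ∈ Finset.Ico 1 t) : Measurable[hist A X D t] (D s) :=
  (comap_measurable (D s)).mono (le_trans le_sup_right (hist_aux A X D t s hs)) le_rfl

lemma hist_At (t : ℕ) : Measurable[hist A X D t] (A t) :=
  (comap_measurable (A t)).mono le_sup_right le_rfl

lemma hist_mono (t : ℕ) (ht : 1 ≤ t) : hist A X D t ≤ hist A X D (t + 1) := by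
  conv_lhs => rw [hist]
  refine sup_le (iSup₂_le fun s hs => hist_aux A X D (t + 1) s ?_) ?_
  · simp only [Finset.mem_Ico] at hs ⊢; omega
  · exact (hist_A A X D (t + 1) t (by simp [ht])).comap_le

lemma hist_le [m0 : MeasurableSpace Ω] (hA : ∀ t, Measurable (A t)) (hX : ∀ t, Measurable (X t))
    (hD : ∀ t, Measurable (D t)) (t : ℕ) : hist A X D t ≤ m0 := by
  rw [hist]
  exact sup_le (iSup₂_le fun s _ =>
    sup_le (sup_le (hA s).comap_le (hX s).comap_le) (hD s).comap_le) (hA t).comap_le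

noncomputable def enoise (θ : Fin d → ℝ) (m : ℕ) (τ : ℝ) (s : ℕ) (ω : Ω) : ℝ :=
  X s ω * (if D s ω ≤ m then (1:ℝ) else 0) - τ * (A s ω ⬝ᵥ θ)

lemma meas_dot (F : MeasurableSpace Ω) (a : Ω → Fin d → ℝ) (h : Measurable a) (θ : Fin d → ℝ) :
    Measurable fun ω => a ω ⬝ᵥ θ := by
  simp only [dotProduct]
  exact Finset.measurable_sum _ fun i _ => ((measurable_pi_apply i).comp h).mul_const _

lemma meas_enoise (F : MeasurableSpace Ω) (θ : Fin d → ℝ) (m : ℕ) (τ : ℝ) (s : ℕ)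
    (hA : Measurable (A s)) (hX : Measurable (X s)) (hD : Measurable (D s)) :
    Measurable (enoise A X D θ m τ s) := by
  have hIm : Measurable (fun n : ℕ => if n ≤ m then (1:ℝ) else 0) := measurable_of_countable _
  exact (hX.mul (hIm.comp hD)).sub ((meas_dot F _ hA θ).const_mul τ)

noncomputable def Mp (θ : Fin d → ℝ) (m : ℕ) (τ lam : ℝ) (t : ℕ) (ω : Ω) : ℝ :=
  Mdet lam (fun s => A s ω) (fun s => enoise A X D θ m τ s ω) t

lemma Mp_hist (θ : Fin d → ℝ) (m : ℕ) (τ lam : ℝ) (t : ℕ) :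
    Measurable[hist A X D t] (Mp A X D θ m τ lam t) :=
  meas_M (hist A X D t) A (enoise A X D θ m τ) lam t (fun s hs => hist_A A X D t s hs)
    fun s hs => meas_enoise A X D _ θ m τ s (hist_A A X D t s hs) (hist_X A X D t s hs)
      (hist_D A X D t s hs)

lemma Mp_pos (θ : Fin d → ℝ) (m : ℕ) (τ lam : ℝ) (t : ℕ) (ω : Ω) :
    0 < Mp A X D θ m τ lam t ω := Real.exp_pos _

lemma enoise_abs (θ : Fin d → ℝ) (m : ℕ) (τ : ℝ) (h0 : 0 ≤ τ) (h1 : τ ≤ 1) (s : ℕ) (ω : Ω)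
    (hA : A s ω ⬝ᵥ θ ∈ Set.Icc (0:ℝ) 1) (hX : X s ω = 0 ∨ X s ω = 1) :
    |enoise A X D θ m τ s ω| ≤ 1 := by
  have a1 : 0 ≤ τ * (A s ω ⬝ᵥ θ) := mul_nonneg h0 hA.1
  have a2 : τ * (A s ω ⬝ᵥ θ) ≤ 1 := mul_le_one₀ h1 hA.1 hA.2
  rw [enoise, abs_le]
  rcases hX with h | h <;> rw [h] <;> split_ifs <;> constructor <;> linarith

lemma Mp_le (θ : Fin d → ℝ) (m : ℕ) (τ lam : ℝ) (hl : 0 < lam) (ω : Ω) (T : ℕ)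
    (he : ∀ s ∈ Finset.Icc 1 T, |enoise A X D θ m τ s ω| ≤ 1) (t : ℕ) (ht : 1 ≤ t) (htT : t ≤ T) :
    Mp A X D θ m τ lam t ω ≤ Real.exp (1 / 2) ^ t := by
  induction t, ht using Nat.le_induction with
  | base => rw [Mp, Mdet_one lam hl]; simp
  | succ t ht ih =>
    rw [Mp, Mdet_succ lam hl _ _ t ht, pow_succ]
    refine mul_le_mul (ih (by omega)) ?_ (Kf_nonneg _ _ _) (by positivity)
    exact Kf_le _ _ _ (wdet_nonneg lam hl _ t) (he t (by simp; omega))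

lemma step_lemma [m0 : MeasurableSpace Ω] (P : Measure Ω) [IsProbabilityMeasure P]
    (lam : ℝ) (hlam : 0 < lam) (m T t : ℕ) (ht : 1 ≤ t) (htT : t ≤ T) (θ : Fin d → ℝ)
    (𝓓 : Measure ℕ) [IsProbabilityMeasure 𝓓]
    (hAmeas : ∀ t, Measurable (A t)) (hXmeas : ∀ t, Measurable (X t))
    (hDmeas : ∀ t, Measurable (D t))
    (hgood : ∀ᵐ ω ∂P, ∀ s ∈ Finset.Icc 1 T, A s ω ⬝ᵥ θ ∈ Set.Icc (0:ℝ) 1 ∧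
      (X s ω = 0 ∨ X s ω = 1))
    (hXcond : P[X t | hist A X D t] =ᵐ[P] fun ω => A t ω ⬝ᵥ θ)
    (hDlaw : Measure.map (D t) P = 𝓓)
    (hDindep : Indep (MeasurableSpace.comap (D t) inferInstance)
        (hist A X D t ⊔ MeasurableSpace.comap (X t) inferInstance) P)
    (τ : ℝ) (hτ : τ = (𝓓 {n | n ≤ m}).toReal) (B : Set Ω) (hB : MeasurableSet[hist A X D t] B) :
    ∫ ω in B, Mp A X D θ m τ lam (t + 1) ω ∂P ≤ ∫ ω in B, Mp A X D θ m τ lam t ω ∂P := by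
  have hF := hist_le A X D hAmeas hXmeas hDmeas t
  have h0 : 0 ≤ τ := by rw [hτ]; positivity
  have h1 : τ ≤ 1 := by rw [hτ]; exact measureReal_le_one
  have htm : t ∈ Finset.Icc 1 T := by simp [ht, htT]
  set q : Ω → ℝ := fun ω => τ * (A t ω ⬝ᵥ θ) with hq
  set w : Ω → ℝ := fun ω => wdet lam (fun s => A s ω) t with hw
  set u : Ω → ℝ := fun ω => udet lam (fun s => A s ω) (fun s => enoise A X D θ m τ s ω) t with hu
  have hqm : Measurable[hist A X D t] q :=
    (meas_dot _ _ (hist_At A X D t) θ).const_mul τ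
  have hVm := meas_inv (hist A X D t) _ (meas_Vmat (hist A X D t) A lam t
    (fun s hs => hist_A A X D t s hs))
  have hwm : Measurable[hist A X D t] w :=
    meas_quad _ _ hVm _ _ (hist_At A X D t) (hist_At A X D t)
  have hSm := meas_S (hist A X D t) A (enoise A X D θ m τ) t (fun s hs => hist_A A X D t s hs)
    fun s hs => meas_enoise A X D _ θ m τ s (hist_A A X D t s hs) (hist_X A X D t s hs)
      (hist_D A X D t s hs)
  have hum : Measurable[hist A X D t] u :=
    meas_quad _ _ hVm _ _ (hist_At A X D t) hSm
  have hMm := Mp_hist A X D θ m τ lam t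
  set M := Mp A X D θ m τ lam t with hM
  have hBm : Measurable[hist A X D t] (B.indicator (fun _ => (1:ℝ))) :=
    (@measurable_const _ _ _ (hist A X D t) (1:ℝ)).indicator hB
  set G1 : Ω → ℝ := fun ω => B.indicator (fun _ => (1:ℝ)) ω * M ω * Kf (w ω) (u ω) (1 - q ω) with hG1
  set G0 : Ω → ℝ := fun ω => B.indicator (fun _ => (1:ℝ)) ω * M ω * Kf (w ω) (u ω) (- q ω) with hG0
  have hG1m : Measurable[hist A X D t] G1 :=
    (hBm.mul hMm).mul (meas_K (hist A X D t) w u _ hwm hum (hqm.const_sub 1))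
  have hG0m : Measurable[hist A X D t] G0 :=
    (hBm.mul hMm).mul (meas_K (hist A X D t) w u _ hwm hum hqm.neg)
  have hw0 : ∀ ω, 0 ≤ w ω := fun ω => wdet_nonneg lam hlam _ t
  have hB0 : ∀ ω, 0 ≤ B.indicator (fun _ => (1:ℝ)) ω := fun ω =>
    Set.indicator_nonneg (fun _ _ => zero_le_one) ω
  have hB1 : ∀ ω, B.indicator (fun _ => (1:ℝ)) ω ≤ 1 := fun ω =>
    Set.indicator_le_self' (fun _ _ => zero_le_one) ω
  set C := Real.exp (1 / 2) ^ t with hC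
  have hC0 : 0 ≤ C := by positivity
  have hM0 : ∀ ω, 0 ≤ M ω := fun ω => (Mp_pos A X D θ m τ lam t ω).le
  have hgood2 : ∀ᵐ ω ∂P, 0 ≤ q ω ∧ q ω ≤ 1 ∧ M ω ≤ C ∧ (X t ω = 0 ∨ X t ω = 1) := by
    filter_upwards [hgood] with ω h
    refine ⟨mul_nonneg h0 (h t htm).1.1, mul_le_one₀ h1 (h t htm).1.1 (h t htm).1.2, ?_,
      (h t htm).2⟩
    exact Mp_le A X D θ m τ lam hlam ω T
      (fun s hs => enoise_abs A X D θ m τ h0 h1 s ω (h s hs).1 (h s hs).2) t ht htT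
  have hbG : ∀ η : ℝ, |η| ≤ 1 → ∀ ω, M ω ≤ C →
      |B.indicator (fun _ => (1:ℝ)) ω * M ω * Kf (w ω) (u ω) η| ≤ C * Real.exp (1 / 2) := by
    intro η hη ω hMC
    rw [abs_of_nonneg (mul_nonneg (mul_nonneg (hB0 ω) (hM0 ω)) (Kf_nonneg _ _ _))]
    refine mul_le_mul ?_ (Kf_le _ _ _ (hw0 ω) hη) (Kf_nonneg _ _ _) hC0
    exact (mul_le_of_le_one_left (hM0 ω) (hB1 ω)).trans hMC
  have hG1b : ∀ᵐ ω ∂P, |G1 ω| ≤ C * Real.exp (1 / 2) := by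
    filter_upwards [hgood2] with ω ⟨a, b, c, _⟩
    exact hbG _ (abs_le.2 ⟨by linarith, by linarith⟩) ω c
  have hG0b : ∀ᵐ ω ∂P, |G0 ω| ≤ C * Real.exp (1 / 2) := by
    filter_upwards [hgood2] with ω ⟨a, b, c, _⟩
    exact hbG _ (abs_le.2 ⟨by linarith, by linarith⟩) ω c
  have hGi : ∀ G : Ω → ℝ, Measurable[hist A X D t] G → (∀ᵐ ω ∂P, |G ω| ≤ C * Real.exp (1 / 2)) →
      Integrable G P := fun G hG hb =>
    Integrable.of_bound (hG.mono hF le_rfl).aestronglyMeasurable _ (by simpa using hb)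
  have hG1i := hGi G1 hG1m hG1b
  have hG0i := hGi G0 hG0m hG0b
  have hMi : Integrable M P := by
    refine Integrable.of_bound (hMm.mono hF le_rfl).aestronglyMeasurable C ?_
    filter_upwards [hgood2] with ω ⟨a, b, c, _⟩
    rwa [Real.norm_of_nonneg (hM0 ω)]
  set Y : Ω → ℝ := fun ω => X t ω * (if D t ω ≤ m then (1:ℝ) else 0) with hY
  have hIm : Measurable (fun n : ℕ => if n ≤ m then (1:ℝ) else 0) := measurable_of_countable _
  have hYm : Measurable Y := (hXmeas t).mul (hIm.comp (hDmeas t))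
  have hY01 : ∀ᵐ ω ∂P, Y ω = 0 ∨ Y ω = 1 := by
    filter_upwards [hgood2] with ω ⟨_, _, _, h⟩
    simp only [hY]
    rcases h with h | h <;> rw [h] <;> split_ifs <;> simp
  have hX01 : ∀ᵐ ω ∂P, X t ω = 0 ∨ X t ω = 1 := by
    filter_upwards [hgood2] with ω h using h.2.2.2
  have hYG : ∀ G : Ω → ℝ, Integrable G P → Integrable (fun ω => Y ω * G ω) P := fun G hG => by
    refine hG.bdd_mul (c := 1) hYm.aestronglyMeasurable ?_
    filter_upwards [hY01] with ω h
    rcases h with h | h <;> simp [h]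
  have hqG : ∀ G : Ω → ℝ, Integrable G P → Integrable (fun ω => q ω * G ω) P := fun G hG => by
    refine hG.bdd_mul (c := 1) (hqm.mono hF le_rfl).aestronglyMeasurable ?_
    filter_upwards [hgood2] with ω ⟨a, b, c, _⟩
    rwa [Real.norm_of_nonneg a]
  have key : ∀ G : Ω → ℝ, Measurable[hist A X D t] G →
      (∀ᵐ ω ∂P, |G ω| ≤ C * Real.exp (1 / 2)) →
      ∫ ω, Y ω * G ω ∂P = ∫ ω, q ω * G ω ∂P := by
    intro G hG hb
    have := EY (hist A X D t) P hF (X t) (hXmeas t) hX01 _ hXcond (D t) (hDmeas t) m 𝓓 hDlaw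
      hDindep G hG _ hb
    rw [← hτ] at this
    exact this
  have hBm0 : MeasurableSet B := hF _ hB
  have e1 : ∫ ω in B, Mp A X D θ m τ lam (t + 1) ω ∂P =
      ∫ ω, (Y ω * G1 ω + (G0 ω - Y ω * G0 ω)) ∂P := by
    rw [← integral_indicator hBm0]
    refine integral_congr_ae ?_
    filter_upwards [hY01] with ω h
    have a1 : Mp A X D θ m τ lam (t + 1) ω = M ω * Kf (w ω) (u ω) (Y ω - q ω) :=
      Mdet_succ lam hlam _ _ t ht
    have a2 : B.indicator (Mp A X D θ m τ lam (t + 1)) ω =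
        B.indicator (fun _ => (1:ℝ)) ω * Mp A X D θ m τ lam (t + 1) ω := by
      by_cases hω : ω ∈ B <;> simp [hω]
    change B.indicator (Mp A X D θ m τ lam (t + 1)) ω = _
    rw [a2, a1]
    simp only [hG1, hG0]
    rcases h with h | h <;> rw [h]
    · rw [zero_sub]; ring
    · ring
  have e2 : ∫ ω in B, M ω ∂P = ∫ ω, B.indicator (fun _ => (1:ℝ)) ω * M ω ∂P := by
    rw [← integral_indicator hBm0]
    congr 1; ext ω
    by_cases hω : ω ∈ B <;> simp [hω]
  have i1 : Integrable (fun ω => G0 ω - Y ω * G0 ω) P := hG0i.sub (hYG _ hG0i)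
  have i2 : Integrable (fun ω => G0 ω - q ω * G0 ω) P := hG0i.sub (hqG _ hG0i)
  rw [e1, e2, integral_add (hYG _ hG1i) i1, integral_sub hG0i (hYG _ hG0i),
    key G1 hG1m hG1b, key G0 hG0m hG0b, ← integral_sub hG0i (hqG _ hG0i),
    ← integral_add (hqG _ hG1i) i2]
  refine integral_mono_ae ((hqG _ hG1i).add i2) ?_ ?_
  · refine hMi.bdd_mul (c := 1) (hBm.mono hF le_rfl).aestronglyMeasurable ?_
    refine Filter.Eventually.of_forall fun ω => ?_
    rw [Real.norm_of_nonneg (hB0 ω)]; exact hB1 ω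
  · filter_upwards [hgood2] with ω ⟨a, b, _, _⟩
    have := Kf_bern (w ω) (u ω) (q ω) (hw0 ω) a b
    have h5 := mul_le_mul_of_nonneg_left this (mul_nonneg (hB0 ω) (hM0 ω))
    simp only [hG1, hG0]
    linarith
end hist
lemma det_final {Ω : Type*} {d : ℕ} (hd : 1 ≤ d) (A : ℕ → Ω → Fin d → ℝ) (X : ℕ → Ω → ℝ)
    (D : ℕ → Ω → ℕ) (lam : ℝ) (hlam : 0 < lam) (m T t : ℕ) (htT : t ≤ T)
    (δ : ℝ) (hδ : δ ∈ Set.Ioo (0 : ℝ) 1) (θ : Fin d → ℝ) (hθ : Real.sqrt (θ ⬝ᵥ θ) ≤ 1)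
    (τ : ℝ) (h0 : 0 ≤ τ) (h1 : τ ≤ 1) (ω : Ω)
    (hA : ∀ s ∈ Finset.Icc 1 T, Real.sqrt (A s ω ⬝ᵥ A s ω) ≤ 1)
    (hX : ∀ s ∈ Finset.Icc 1 T, X s ω = 0 ∨ X s ω = 1)
    (hM : Mp A X D θ m τ lam t ω ≤ 1 / δ) :
    mnorm (Vmat (fun s => A s ω) lam t) (thetaHatW A X D lam m t ω - τ • θ) ≤
      2 * fconf d lam δ t + ∑ s ∈ Finset.Ico (max 1 (t - m)) t,
        mnorm (Vmat (fun s => A s ω) lam t)⁻¹ (A s ω) := by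
  have hV := Vmat_posDef (fun s => A s ω) lam hlam t
  have hT : ∀ s ∈ Finset.Ico 1 t, s ∈ Finset.Icc 1 T := by
    intro s hs; simp only [Finset.mem_Ico, Finset.mem_Icc] at hs ⊢; omega
  set a : ℕ → Fin d → ℝ := fun s => A s ω with ha
  set e : ℕ → ℝ := fun s => enoise A X D θ m τ s ω with he
  set V := Vmat a lam t with hVd
  set S := Sdet a e t with hS
  -- the delayed part
  set c : ℕ → ℝ := fun s => X s ω * (if D s ω ≤ min m (t - s) then (1:ℝ) else 0) -
    X s ω * (if D s ω ≤ m then (1:ℝ) else 0) with hc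
  have hVθ : V *ᵥ θ = lam • θ + ∑ s ∈ Finset.Ico 1 t, (a s ⬝ᵥ θ) • a s := by
    rw [hVd, Vmat, add_mulVec, smul_mulVec, one_mulVec, sum_mulVec]
    simp only [vmv]
  have hdecomp : thetaHatW A X D lam m t ω - τ • θ =
      V⁻¹ *ᵥ (S + ((-(lam * τ)) • θ + ∑ s ∈ Finset.Ico 1 t, c s • a s)) := by
    have : τ • θ = V⁻¹ *ᵥ (τ • (V *ᵥ θ)) := by rw [mulVec_smul, V_mul_inv hV]
    rw [this, thetaHatW, ← mulVec_sub]
    congr 1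
    rw [hVθ, hS, Sdet, smul_add, Finset.smul_sum]
    have e1 : ∑ s ∈ Finset.Ico 1 t,
        (X s ω * (if D s ω ≤ min m (t - s) then (1 : ℝ) else 0)) • A s ω =
        ∑ s ∈ Finset.Ico 1 t, e s • a s + ∑ s ∈ Finset.Ico 1 t, c s • a s +
          ∑ s ∈ Finset.Ico 1 t, τ • (a s ⬝ᵥ θ) • a s := by
      rw [← Finset.sum_add_distrib, ← Finset.sum_add_distrib]
      refine Finset.sum_congr rfl fun s _ => ?_
      rw [smul_smul, ← add_smul, ← add_smul]
      congr 1
      simp only [he, hc, enoise, ha]; ring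
    rw [e1, neg_smul, mul_comm lam τ, mul_smul]
    abel
  rw [hdecomp, mnorm_inv hV]
  have hVi := hV.inv
  have b1 : mnorm V⁻¹ S ≤ √(2 * Real.log (1 / δ) + d * Real.log ((d * lam + t) / (d * lam))) := by
    have hlog : (S ⬝ᵥ V⁻¹ *ᵥ S - Real.log (V.det / lam ^ d)) / 2 ≤ Real.log (1 / δ) := by
      rw [Real.le_log_iff_exp_le (by have := hδ.1; positivity)]
      exact hM
    have hld := logdet_le hd lam hlam a t (fun s hs => by
      simpa using (Real.sqrt_le_left zero_le_one).1 (hA s (hT s hs)))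
    rw [mnorm]
    apply Real.sqrt_le_sqrt
    linarith
  have b2 : mnorm V⁻¹ ((-(lam * τ)) • θ) ≤ √lam := by
    rw [mnorm_smul, abs_neg, abs_of_nonneg (by positivity)]
    have h3 := mnorm_theta a lam hlam t θ hθ
    have h4 : 0 ≤ lam * mnorm V⁻¹ θ := mul_nonneg hlam.le (Real.sqrt_nonneg _)
    calc lam * τ * mnorm V⁻¹ θ = τ * (lam * mnorm V⁻¹ θ) := by ring
      _ ≤ lam * mnorm V⁻¹ θ := mul_le_of_le_one_left h4 h1
      _ ≤ _ := h3
  have b3 : mnorm V⁻¹ (∑ s ∈ Finset.Ico 1 t, c s • a s) ≤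
      ∑ s ∈ Finset.Ico (max 1 (t - m)) t, mnorm V⁻¹ (a s) := by
    have hsub : Finset.Ico (max 1 (t - m)) t ⊆ Finset.Ico 1 t :=
      Finset.Ico_subset_Ico_left (le_max_left _ _)
    rw [← Finset.sum_subset hsub]
    · refine (mnorm_sum hVi _ _).trans (Finset.sum_le_sum fun s hs => ?_)
      rw [mnorm_smul]
      refine mul_le_of_le_one_left (Real.sqrt_nonneg _) ?_
      have := hX s (hT s (hsub hs))
      rw [abs_le]
      simp only [hc]
      rcases this with h | h <;> rw [h] <;> split_ifs <;> constructor <;> norm_num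
    · intro s hs hs'
      have : min m (t - s) = m := by
        simp only [Finset.mem_Ico] at hs hs'
        omega
      simp only [hc, this, sub_self, zero_smul]
  have t1 := mnorm_add hVi S ((-(lam * τ)) • θ + ∑ s ∈ Finset.Ico 1 t, c s • a s)
  have t2 := mnorm_add hVi ((-(lam * τ)) • θ) (∑ s ∈ Finset.Ico 1 t, c s • a s)
  have f0 : 0 ≤ fconf d lam δ t := add_nonneg (Real.sqrt_nonneg _) (Real.sqrt_nonneg _)
  have f1 : fconf d lam δ t = √lam + √(2 * Real.log (1 / δ) + d * Real.log ((d * lam + t) / (d * lam))) := rfl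
  linarith

theorem concentration_windowed_least_squares
    {Ω : Type*} [MeasurableSpace Ω] (P : Measure Ω) [IsProbabilityMeasure P]
    {d : ℕ} (hd : 1 ≤ d) (lam : ℝ) (hlam : 0 < lam)
    (m T : ℕ) (hm : 1 ≤ m) (hT : 1 ≤ T)
    (δ : ℝ) (hδ : δ ∈ Set.Ioo (0 : ℝ) 1)
    (θ : Fin d → ℝ) (hθ : Real.sqrt (θ ⬝ᵥ θ) ≤ 1)
    (𝓓 : Measure ℕ) [IsProbabilityMeasure 𝓓]
    (A : ℕ → Ω → Fin d → ℝ) (X : ℕ → Ω → ℝ) (D : ℕ → Ω → ℕ)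
    (hAmeas : ∀ t, Measurable (A t)) (hXmeas : ∀ t, Measurable (X t))
    (hDmeas : ∀ t, Measurable (D t))
    -- actions have norm at most one and mean rewards in [0,1], almost surely
    (hAnorm : ∀ t ∈ Finset.Icc 1 T, ∀ᵐ ω ∂P, Real.sqrt (A t ω ⬝ᵥ A t ω) ≤ 1)
    (hAθ : ∀ t ∈ Finset.Icc 1 T, ∀ᵐ ω ∂P, A t ω ⬝ᵥ θ ∈ Set.Icc (0 : ℝ) 1)
    -- rewards are {0,1}-valued and, conditionally on the past and `A_t`,
    -- Bernoulli with mean `⟨A_t, θ⟩`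
    (hX01 : ∀ t ∈ Finset.Icc 1 T, ∀ᵐ ω ∂P, X t ω = 0 ∨ X t ω = 1)
    (hXcond : ∀ t ∈ Finset.Icc 1 T,
      P[X t | hist A X D t] =ᵐ[P] fun ω => A t ω ⬝ᵥ θ)
    -- delays have law `𝓓` and are independent of the past, `A_t` and `X_t`
    (hDlaw : ∀ t ∈ Finset.Icc 1 T, Measure.map (D t) P = 𝓓)
    (hDindep : ∀ t ∈ Finset.Icc 1 T,
      Indep (MeasurableSpace.comap (D t) inferInstance)
        (hist A X D t ⊔ MeasurableSpace.comap (X t) inferInstance) P) :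
    P {ω | ∀ t ∈ Finset.Icc 1 T,
        mnorm (Vmat (fun s => A s ω) lam t)
            (thetaHatW A X D lam m t ω - (𝓓 {n | n ≤ m}).toReal • θ) ≤
          2 * fconf d lam δ t +
            ∑ s ∈ Finset.Ico (max 1 (t - m)) t,
              mnorm (Vmat (fun s => A s ω) lam t)⁻¹ (A s ω)} ≥
      ENNReal.ofReal (1 - 2 * δ) := by
  set τ := (𝓓 {n | n ≤ m}).toReal with hτ
  have h0 : 0 ≤ τ := by rw [hτ]; positivity
  have h1 : τ ≤ 1 := by rw [hτ]; exact measureReal_le_one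
  have hgood : ∀ᵐ ω ∂P, ∀ s ∈ Finset.Icc 1 T, A s ω ⬝ᵥ θ ∈ Set.Icc (0:ℝ) 1 ∧
      (X s ω = 0 ∨ X s ω = 1) :=
    (Filter.eventually_all_finset _).2 fun s hs => (hAθ s hs).and (hX01 s hs)
  have hgoodA : ∀ᵐ ω ∂P, ∀ s ∈ Finset.Icc 1 T, Real.sqrt (A s ω ⬝ᵥ A s ω) ≤ 1 :=
    (Filter.eventually_all_finset _).2 hAnorm
  have hF := hist_le A X D hAmeas hXmeas hDmeas
  have hint : ∀ k ≤ T - 1, Integrable (Mp A X D θ m τ lam (k + 1)) P := by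
    intro k hk
    refine Integrable.of_bound
      ((Mp_hist A X D θ m τ lam (k + 1)).mono (hF (k + 1)) le_rfl).aestronglyMeasurable
      (Real.exp (1 / 2) ^ (k + 1)) ?_
    filter_upwards [hgood] with ω h
    rw [Real.norm_of_nonneg (Mp_pos A X D θ m τ lam _ ω).le]
    exact Mp_le A X D θ m τ lam hlam ω T
      (fun s hs => enoise_abs A X D θ m τ h0 h1 s ω (h s hs).1 (h s hs).2) (k + 1) (by omega)
      (by omega)
  have hv := ville P (fun k => hist A X D (k + 1)) (fun k => hF (k + 1))
    (fun k => hist_mono A X D (k + 1) (by omega)) (fun k => Mp A X D θ m τ lam (k + 1))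
    (fun k => Mp_hist A X D θ m τ lam (k + 1)) (T - 1) hint
    (fun k hk B hB => by
      have hk' : k + 1 ∈ Finset.Icc 1 T := by simp; omega
      exact step_lemma A X D P lam hlam m T (k + 1) (by omega) (by omega) θ 𝓓 hAmeas hXmeas hDmeas
        hgood (hXcond _ hk') (hDlaw _ hk') (hDindep _ hk') τ hτ B hB)
    (by simp [Mp, Mdet_one lam hlam]) (fun k ω => (Mp_pos A X D θ m τ lam _ ω).le) (1 / δ)
  set E := {ω | ∃ k ≤ T - 1, 1 / δ ≤ Mp A X D θ m τ lam (k + 1) ω} with hE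
  have hPE : P.real E ≤ δ := by
    have := hδ.1
    rw [one_div, inv_mul_le_iff₀ this, mul_one] at hv
    exact hv
  have hEm : MeasurableSet E := by
    have : E = ⋃ k ∈ Finset.range (T - 1 + 1), {ω | 1 / δ ≤ Mp A X D θ m τ lam (k + 1) ω} := by
      ext ω; simp [hE, Nat.lt_succ_iff]
    rw [this]
    exact Finset.measurableSet_biUnion _ fun k _ =>
      hF (k + 1) _ (Mp_hist A X D θ m τ lam (k + 1) measurableSet_Ici)
  have hcompl : ENNReal.ofReal (1 - 2 * δ) ≤ P Eᶜ := by
    rw [← ofReal_measureReal, probReal_compl_eq_one_sub hEm]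
    apply ENNReal.ofReal_le_ofReal
    have := hδ.1
    linarith
  refine hcompl.trans (measure_mono_ae ?_)
  filter_upwards [hgood, hgoodA] with ω hg hgA hω t ht
  simp only [Finset.mem_Icc] at ht
  refine det_final hd A X D lam hlam m T t ht.2 δ hδ θ hθ τ h0 h1 ω hgA (fun s hs => (hg s hs).2) ?_
  by_contra hcon
  apply hω
  refine ⟨t - 1, by omega, ?_⟩
  rw [Nat.sub_add_cancel ht.1]
  exact (not_le.1 hcon).le
end

section
/- Let V be a symmetric positive definite d×d real matrix, τ > 0, α ≥ 0, and θ, θ̂ ∈ ℝ^d with ‖θ̂ − τ·θ‖_V ≤ α. Let 𝒜 ⊂ ℝ^d be a finite nonempty set and let A ∈ 𝒜 satisfy ⟨A, θ̂⟩ + α‖A‖_{V^{-1}} ≥ ⟨a, θ̂⟩ + α‖a‖_{V^{-1}} for all a ∈ 𝒜. Then for every a ∈ 𝒜, ⟨a, θ⟩ − ⟨A, θ⟩ ≤ (2α/τ)·‖A‖_{V^{-1}}. -/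
open Matrix

theorem mnorm_cs {d : ℕ} (V : Matrix (Fin d) (Fin d) ℝ) (hV : V.PosDef)
    (x u : Fin d → ℝ) : |x ⬝ᵥ u| ≤ mnorm V⁻¹ x * mnorm V u := by
  have hdet : IsUnit V.det := (Matrix.isUnit_iff_isUnit_det V).1 hV.isUnit
  have hVT : Vᵀ = V := by
    have := hV.isHermitian.eq
    rwa [Matrix.conjTranspose_eq_transpose_of_trivial] at this
  have hVy : V *ᵥ (V⁻¹ *ᵥ x) = x := by
    rw [Matrix.mulVec_mulVec, Matrix.mul_nonsing_inv V hdet, Matrix.one_mulVec]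
  have hc : (V⁻¹ *ᵥ x) ⬝ᵥ (V *ᵥ u) = x ⬝ᵥ u := by
    rw [Matrix.dotProduct_mulVec, ← Matrix.mulVec_transpose, hVT, hVy]
  have h1 : ∀ t : ℝ, 0 ≤ (u ⬝ᵥ V *ᵥ u) * (t * t) + (2 * (x ⬝ᵥ u)) * t + x ⬝ᵥ V⁻¹ *ᵥ x := by
    intro t
    have h := hV.posSemidef.dotProduct_mulVec_nonneg (t • u + V⁻¹ *ᵥ x)
    simp only [star_trivial, Matrix.mulVec_add, Matrix.mulVec_smul, hVy, dotProduct_add,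
      add_dotProduct, smul_dotProduct, dotProduct_smul, hc, smul_eq_mul] at h
    rw [dotProduct_comm u x, dotProduct_comm (V⁻¹ *ᵥ x) x] at h
    linarith
  have h2 := discrim_le_zero h1
  unfold discrim at h2
  have hx : 0 ≤ x ⬝ᵥ V⁻¹ *ᵥ x := by
    simpa using hV.posSemidef.inv.dotProduct_mulVec_nonneg x
  unfold mnorm
  rw [← Real.sqrt_mul hx]
  apply Real.abs_le_sqrt
  linarith

theorem per_round_optimism_regret_bound
    {d : ℕ} (V : Matrix (Fin d) (Fin d) ℝ) (hV : V.PosDef)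
    (τ : ℝ) (hτ : 0 < τ) (α : ℝ) (hα : 0 ≤ α)
    (θ θhat : Fin d → ℝ)
    (hconc : mnorm V (θhat - τ • θ) ≤ α)
    (𝒜 : Finset (Fin d → ℝ)) (h𝒜 : 𝒜.Nonempty)
    (A : Fin d → ℝ) (hA : A ∈ 𝒜)
    (hopt : ∀ a ∈ 𝒜, a ⬝ᵥ θhat + α * mnorm V⁻¹ a ≤ A ⬝ᵥ θhat + α * mnorm V⁻¹ A) :
    ∀ a ∈ 𝒜, a ⬝ᵥ θ - A ⬝ᵥ θ ≤ (2 * α / τ) * mnorm V⁻¹ A := by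
  intro a ha
  have key : ∀ x : Fin d → ℝ, |x ⬝ᵥ θhat - τ * (x ⬝ᵥ θ)| ≤ α * mnorm V⁻¹ x := by
    intro x
    have h := mnorm_cs V hV x (θhat - τ • θ)
    rw [dotProduct_sub, dotProduct_smul, smul_eq_mul] at h
    have h0 : 0 ≤ mnorm V⁻¹ x := Real.sqrt_nonneg _
    nlinarith [mul_le_mul_of_nonneg_left hconc h0]
  have h1 := abs_le.1 (key a)
  have h2 := abs_le.1 (key A)
  have h3 := hopt a ha
  rw [div_mul_eq_mul_div, le_div_iff₀ hτ]
  linarith [h1.1, h2.2]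
end

section
/- Let d ≥ 1, λ ≥ 1, T ≥ 1, and A_1,…,A_T ∈ ℝ^d with ‖A_t‖₂ ≤ 1 for all t, and let f_1 ≤ f_2 ≤ … ≤ f_T be nonnegative reals. Then Σ_{t=1}^T f_t · ‖A_t‖_{V_t(λ)^{-1}} ≤ f_T · √(2 d T log((dλ + T)/(dλ))). -/
open Finset Matrix

theorem wep_posdef {d : ℕ} (A : ℕ → Fin d → ℝ) (lam : ℝ) (hlam : 1 ≤ lam) (t : ℕ) :
    (Vmat A lam t).PosDef := by
  unfold Vmat
  refine PosDef.add_posSemidef (PosDef.one.smul (by linarith)) ?_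
  refine posSemidef_sum _ fun s _ => ?_
  simpa using posSemidef_vecMulVec_self_star (A s)

theorem wep_quad {d : ℕ} (A : ℕ → Fin d → ℝ) (lam : ℝ) (t : ℕ) (y : Fin d → ℝ) :
    lam * (y ⬝ᵥ y) ≤ y ⬝ᵥ (Vmat A lam t).mulVec y := by
  have h : (∑ s ∈ Finset.Ico 1 t, vecMulVec (A s) (A s)).PosSemidef := by
    refine posSemidef_sum _ fun s _ => ?_
    simpa using posSemidef_vecMulVec_self_star (A s)
  have := h.dotProduct_mulVec_nonneg y
  unfold Vmat
  rw [add_mulVec, dotProduct_add, smul_mulVec, one_mulVec, dotProduct_smul, smul_eq_mul]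
  simpa using this

theorem wep_det {d : ℕ} (A : ℕ → Fin d → ℝ) (lam : ℝ) (hlam : 1 ≤ lam) (t : ℕ) (ht : 1 ≤ t) :
    (Vmat A lam (t+1)).det = (Vmat A lam t).det * (1 + A t ⬝ᵥ (Vmat A lam t)⁻¹.mulVec (A t)) := by
  have h : Vmat A lam (t+1) = Vmat A lam t
      + replicateCol Unit (A t) * replicateRow Unit (A t) := by
    unfold Vmat
    rw [Finset.sum_Ico_succ_top ht, ← add_assoc, ← vecMulVec_eq]
  rw [h, det_add_replicateCol_mul_replicateRow
    (isUnit_iff_ne_zero.mpr (wep_posdef A lam hlam t).det_pos.ne')]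
  congr 1
  rw [det_unique]
  simp [Matrix.mul_apply, dotProduct, mulVec, Finset.sum_mul, Finset.mul_sum]
  rw [Finset.sum_comm]
  simp [mul_assoc]

theorem wep_nonneg {d : ℕ} (A : ℕ → Fin d → ℝ) (lam : ℝ) (hlam : 1 ≤ lam) (t : ℕ) :
    0 ≤ A t ⬝ᵥ (Vmat A lam t)⁻¹.mulVec (A t) := by
  simpa using (wep_posdef A lam hlam t).inv.posSemidef.dotProduct_mulVec_nonneg (A t)

theorem wep_le_one {d : ℕ} (A : ℕ → Fin d → ℝ) (lam : ℝ) (hlam : 1 ≤ lam) (t : ℕ)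
    (h1 : A t ⬝ᵥ A t ≤ 1) :
    A t ⬝ᵥ (Vmat A lam t)⁻¹.mulVec (A t) ≤ 1 := by
  have h0 := wep_nonneg A lam hlam t
  set y := (Vmat A lam t)⁻¹.mulVec (A t) with hy
  have hVy : (Vmat A lam t).mulVec y = A t := by
    rw [hy, mulVec_mulVec, mul_nonsing_inv _
      (isUnit_iff_ne_zero.mpr (wep_posdef A lam hlam t).det_pos.ne'), one_mulVec]
  have hq := wep_quad A lam t y
  rw [hVy, dotProduct_comm y (A t)] at hq
  have hyy : 0 ≤ y ⬝ᵥ y := Finset.sum_nonneg fun i _ => mul_self_nonneg _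
  have hcs : (A t ⬝ᵥ y)^2 ≤ (A t ⬝ᵥ A t) * (y ⬝ᵥ y) := by
    have := Finset.sum_mul_sq_le_sq_mul_sq Finset.univ (A t) y
    simpa [dotProduct, sq] using this
  nlinarith

theorem wep_trace {d : ℕ} (A : ℕ → Fin d → ℝ) (lam : ℝ) (T : ℕ)
    (h1 : ∀ t ∈ Finset.Icc 1 T, A t ⬝ᵥ A t ≤ 1) :
    (Vmat A lam (T+1)).trace ≤ d * lam + T := by
  unfold Vmat
  rw [trace_add, trace_smul, trace_one, trace_sum]
  have : ∑ s ∈ Finset.Ico 1 (T+1), (vecMulVec (A s) (A s)).trace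
      ≤ ∑ s ∈ Finset.Ico 1 (T+1), (1:ℝ) := by
    refine Finset.sum_le_sum fun s hs => ?_
    rw [trace_vecMulVec]
    exact h1 s (by simp at hs ⊢; omega)
  simp at this ⊢
  linarith

theorem wep_logdet {d : ℕ} (M : Matrix (Fin d) (Fin d) ℝ) (hM : M.PosDef) (c : ℝ) (hc : 0 < c)
    (h : M.trace ≤ d * c) : Real.log M.det ≤ d * Real.log c := by
  have hH := hM.isHermitian
  have hd : M.det = ∏ i, hH.eigenvalues i := by simpa using hH.det_eq_prod_eigenvalues
  have ht : M.trace = ∑ i, hH.eigenvalues i := by simpa using hH.trace_eq_sum_eigenvalues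
  rw [hd, Real.log_prod (fun i _ => (hM.eigenvalues_pos i).ne')]
  have h2 : ∑ i, Real.log (hH.eigenvalues i) ≤ ∑ i, (hH.eigenvalues i / c - 1 + Real.log c) := by
    refine Finset.sum_le_sum fun i _ => ?_
    have hp : 0 < hH.eigenvalues i := hM.eigenvalues_pos i
    have := Real.log_le_sub_one_of_pos (div_pos hp hc)
    rw [Real.log_div hp.ne' hc.ne'] at this
    linarith
  rw [Finset.sum_add_distrib, Finset.sum_sub_distrib, ← Finset.sum_div, ← ht] at h2
  have h3 : M.trace / c ≤ d := by rw [div_le_iff₀ hc]; exact h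
  simp at h2
  linarith

theorem wep_sumlog {d : ℕ} (A : ℕ → Fin d → ℝ) (lam : ℝ) (hlam : 1 ≤ lam) (T : ℕ) :
    ∑ t ∈ Finset.Icc 1 T, Real.log (1 + A t ⬝ᵥ (Vmat A lam t)⁻¹.mulVec (A t))
      = Real.log (Vmat A lam (T+1)).det - d * Real.log lam := by
  induction T with
  | zero => simp [Vmat, det_smul]
  | succ n ih =>
    have h0 := wep_nonneg A lam hlam (n+1)
    rw [Finset.sum_Icc_succ_top (by omega), ih, wep_det A lam hlam (n+1) (by omega),
      Real.log_mul (wep_posdef A lam hlam _).det_pos.ne' (by linarith)]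
    ring

theorem weighted_elliptical_potential_sum
    {d : ℕ} (hd : 1 ≤ d) (lam : ℝ) (hlam : 1 ≤ lam) (T : ℕ) (hT : 1 ≤ T)
    (A : ℕ → Fin d → ℝ) (hA : ∀ t ∈ Finset.Icc 1 T, Real.sqrt (A t ⬝ᵥ A t) ≤ 1)
    (f : ℕ → ℝ) (hfnonneg : ∀ t ∈ Finset.Icc 1 T, 0 ≤ f t)
    (hfmono : ∀ s t : ℕ, 1 ≤ s → s ≤ t → t ≤ T → f s ≤ f t) :
    ∑ t ∈ Finset.Icc 1 T, f t * mnorm (Vmat A lam t)⁻¹ (A t) ≤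
      f T * Real.sqrt (2 * d * T * Real.log ((d * lam + T) / (d * lam))) := by
  have hA1 : ∀ t ∈ Finset.Icc 1 T, A t ⬝ᵥ A t ≤ 1 := fun t ht => by
    have := hA t ht
    simpa using (Real.sqrt_le_left zero_le_one).mp this
  have hdpos : (0:ℝ) < d := by exact_mod_cast hd
  have hlpos : (0:ℝ) < lam := by linarith
  have hTpos : (0:ℝ) < T := by exact_mod_cast hT
  have hfT : 0 ≤ f T := hfnonneg T (by simp [hT])
  set x : ℕ → ℝ := fun t => A t ⬝ᵥ (Vmat A lam t)⁻¹.mulVec (A t) with hx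
  have hx0 : ∀ t, 0 ≤ x t := fun t => wep_nonneg A lam hlam t
  have hsum : ∑ t ∈ Finset.Icc 1 T, x t ≤ 2 * d * Real.log ((d * lam + T) / (d * lam)) := by
    have h1 : ∑ t ∈ Finset.Icc 1 T, x t ≤ ∑ t ∈ Finset.Icc 1 T, 2 * Real.log (1 + x t) := by
      refine Finset.sum_le_sum fun t ht => ?_
      have hle : x t ≤ 1 := wep_le_one A lam hlam t (hA1 t ht)
      have h0 := hx0 t
      have h2 := Real.le_log_one_add_of_nonneg h0
      have h3 : x t / 2 ≤ 2 * x t / (x t + 2) := by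
        rw [le_div_iff₀ (by linarith)]
        nlinarith
      linarith
    rw [← Finset.mul_sum, wep_sumlog A lam hlam T] at h1
    have h2 := wep_logdet _ (wep_posdef A lam hlam (T+1)) ((d * lam + T) / d) (by positivity)
      (by rw [mul_div_cancel₀ _ hdpos.ne']; exact wep_trace A lam T hA1)
    have h3 : Real.log ((d * lam + T) / (d * lam))
        = Real.log ((d * lam + T) / d) - Real.log lam := by
      rw [← Real.log_div (by positivity) (by positivity), div_div]
    rw [h3]
    linarith
  have hcs : ∑ t ∈ Finset.Icc 1 T, Real.sqrt (x t)
      ≤ Real.sqrt (2 * d * T * Real.log ((d * lam + T) / (d * lam))) := by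
    apply Real.le_sqrt_of_sq_le
    have h := sq_sum_le_card_mul_sum_sq (s := Finset.Icc 1 T) (f := fun t => Real.sqrt (x t))
    simp only [Real.sq_sqrt (hx0 _), Nat.card_Icc, Nat.add_sub_cancel] at h
    nlinarith
  calc _ ≤ ∑ t ∈ Finset.Icc 1 T, f T * Real.sqrt (x t) := by
        refine Finset.sum_le_sum fun t ht => ?_
        rw [Finset.mem_Icc] at ht
        exact mul_le_mul_of_nonneg_right (hfmono t T ht.1 ht.2 le_rfl) (Real.sqrt_nonneg _)
    _ ≤ _ := by
        rw [← Finset.mul_sum]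
        exact mul_le_mul_of_nonneg_left hcs hfT
end

section
/- For every τ ∈ (0,1] and every Δ ∈ (0, 1/8], the Bernoulli relative entropy satisfies d(τ/2, τ(1/2 + 2Δ)) ≤ 32 τ Δ². -/
/-- Bernoulli relative entropy `d(p,q) = p log(p/q) + (1-p) log((1-p)/(1-q))`.
(In Lean, `Real.log 0 = 0`, so the convention `0 · log 0 = 0` holds automatically.) -/
noncomputable def klBer (p q : ℝ) : ℝ :=
  p * Real.log (p / q) + (1 - p) * Real.log ((1 - p) / (1 - q))

theorem klBer_censored_gap_bound (τ Δ : ℝ)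
    (hτ : τ ∈ Set.Ioc (0 : ℝ) 1) (hΔ : Δ ∈ Set.Ioc (0 : ℝ) (1 / 8)) :
    klBer (τ / 2) (τ * (1 / 2 + 2 * Δ)) ≤ 32 * τ * Δ ^ 2 := by
  obtain ⟨h0, h1⟩ := hτ
  obtain ⟨d0, d1⟩ := hΔ
  unfold klBer
  have hq1 : τ / 2 ≤ τ * (1 / 2 + 2 * Δ) := by nlinarith [mul_pos h0 d0]
  have hq2 : τ * (1 / 2 + 2 * Δ) ≤ 3 / 4 := by nlinarith [mul_pos h0 d0]
  have hpq : (τ / 2 - τ * (1 / 2 + 2 * Δ)) ^ 2 = 4 * τ ^ 2 * Δ ^ 2 := by ring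
  generalize τ * (1 / 2 + 2 * Δ) = q at *
  have q0 : 0 < q := by linarith
  have q1 : 0 < 1 - q := by linarith
  have p0 : 0 < τ / 2 := by linarith
  have p1 : 0 < 1 - τ / 2 := by linarith
  have a := mul_le_mul_of_nonneg_left (Real.log_le_sub_one_of_pos (div_pos p0 q0)) p0.le
  have b := mul_le_mul_of_nonneg_left (Real.log_le_sub_one_of_pos (div_pos p1 q1)) p1.le
  have e : τ / 2 * (τ / 2 / q - 1) + (1 - τ / 2) * ((1 - τ / 2) / (1 - q) - 1)
      = (τ / 2 - q) ^ 2 / (q * (1 - q)) := by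
    have := q0.ne'
    have := q1.ne'
    field_simp
    ring
  have f : (τ / 2 - q) ^ 2 / (q * (1 - q)) ≤ 32 * τ * Δ ^ 2 := by
    rw [hpq, div_le_iff₀ (mul_pos q0 q1)]
    have g : τ / 8 ≤ q * (1 - q) := by nlinarith
    have k : 0 ≤ 32 * τ * Δ ^ 2 := by positivity
    nlinarith [mul_le_mul_of_nonneg_left g k]
  linarith
end

section
/- For all integers T ≥ 1 and K ≥ 2 and every τ ∈ (0,1], there exists Δ ∈ (0, 1/8] such that (TΔ/4) · exp(−32 τ Δ² T/(K−1)) ≥ (1/128) · min( T, √(T(K−1)/τ) ). -/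
theorem lower_bound_tuning (T K : ℕ) (hT : 1 ≤ T) (hK : 2 ≤ K)
    (τ : ℝ) (hτ : τ ∈ Set.Ioc (0 : ℝ) 1) :
    ∃ Δ : ℝ, Δ ∈ Set.Ioc (0 : ℝ) (1 / 8) ∧
      (T * Δ / 4) * Real.exp (-(32 * τ * Δ ^ 2 * T / (K - 1))) ≥
        (1 / 128) * min (T : ℝ) (Real.sqrt (T * (K - 1) / τ)) := by
  obtain ⟨h0, -⟩ := hτ
  have hT' : (0 : ℝ) < T := by exact_mod_cast hT
  have hK' : (0 : ℝ) < (K : ℝ) - 1 := by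
    have : (2 : ℝ) ≤ K := by exact_mod_cast hK
    linarith
  generalize (K : ℝ) - 1 = k at *
  generalize (T : ℝ) = t at *
  have hq : 0 < t * k / τ := by positivity
  have hS : 0 < Real.sqrt (t * k / τ) := Real.sqrt_pos.mpr hq
  have hM : 0 < min t (Real.sqrt (t * k / τ)) := lt_min hT' hS
  have hMt : min t (Real.sqrt (t * k / τ)) ≤ t := min_le_left _ _
  have hM2 : (min t (Real.sqrt (t * k / τ))) ^ 2 ≤ t * k / τ := by
    calc _ ≤ (Real.sqrt (t * k / τ)) ^ 2 := by
          gcongr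
          exact min_le_right _ _
      _ = _ := Real.sq_sqrt hq.le
  generalize min t (Real.sqrt (t * k / τ)) = M at *
  refine ⟨M / (8 * t), ⟨by positivity, ?_⟩, ?_⟩
  · rw [div_le_div_iff₀ (by positivity) (by norm_num)]
    linarith
  · have e1 : t * (M / (8 * t)) / 4 = M / 32 := by
      field_simp
      norm_num
    have e2 : 32 * τ * (M / (8 * t)) ^ 2 * t / k ≤ 1 / 2 := by
      rw [le_div_iff₀ h0] at hM2
      have : 32 * τ * (M / (8 * t)) ^ 2 * t / k = (M ^ 2 * τ) / (2 * (t * k)) := by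
        field_simp
        norm_num
      rw [this, div_le_div_iff₀ (by positivity) (by norm_num)]
      linarith
    rw [e1]
    have e3 := Real.add_one_le_exp (-(32 * τ * (M / (8 * t)) ^ 2 * t / k))
    have e4 : (1 / 2 : ℝ) ≤ Real.exp (-(32 * τ * (M / (8 * t)) ^ 2 * t / k)) := by linarith
    nlinarith
end
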